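/- For every integer n ≥ 1, the signed sum over all derangements π of [n] of the monomial obtained by multiplying x_j over all right-to-left minima indices j of π and y_j over all excedance indices j of π equals (-1)^(n-1) times the sum over j from 1 to n-1 of y_1⋯y_j · x_{j+1}⋯x_n. That is, ∑_{π ∈ D_n} (-1)^{inv(π)} (∏_{j ∈ RLMi(π)} x_j)(∏_{j ∈ EXCi(π)} y_j) = (-1)^{n-1} ∑_{j=1}^{n-1} y_1⋯y_j x_{j+1}⋯x_n, as an identity of polynomials in the commuting variables x_1,…,x_n,y_1,…,y_n. -/

import Mathlib

open Finset MvPolynomial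

/-- Number of inversions of a permutation of `Fin n`
(pairs `p.1 < p.2` with `π p.1 > π p.2`). -/
def inversions {n : ℕ} (π : Equiv.Perm (Fin n)) : ℕ :=
  (Finset.univ.filter fun p : Fin n × Fin n => p.1 < p.2 ∧ π p.2 < π p.1).card

/-- Excedance indices of a permutation. -/
def EXCi {n : ℕ} (π : Equiv.Perm (Fin n)) : Finset (Fin n) :=
  Finset.univ.filter fun i => i < π i

/-- Excedance values of a permutation. -/
def EXCv {n : ℕ} (π : Equiv.Perm (Fin n)) : Finset (Fin n) :=
  (EXCi π).image π

/-- Right-to-left minima indices of a permutation. -/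
def RLMi {n : ℕ} (π : Equiv.Perm (Fin n)) : Finset (Fin n) :=
  Finset.univ.filter fun i => ∀ j, i < j → π i < π j

/-- Right-to-left minima values of a permutation. -/
def RLMv {n : ℕ} (π : Equiv.Perm (Fin n)) : Finset (Fin n) :=
  (RLMi π).image π

/-- The derangements of `Fin n`, i.e. permutations with no fixed point. -/
def derangementsF (n : ℕ) : Finset (Equiv.Perm (Fin n)) :=
  Finset.univ.filter fun π => ∀ i, π i ≠ i

/-!
By the Leibniz formula, the sum with right-to-left minima replaced by non-excedances is the
determinant of the matrix with `y i` to the right and `x i` to the left of the zero diagonal in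
row `i`; subtracting from each column its predecessor makes this matrix almost bidiagonal.

The replacement is justified by a sign-reversing involution. Say that `i` crosses level `v` if
`i < v ≤ π i`. If two positions cross a common level, composing `π` with their transposition
changes the sign but neither the excedances, the right-to-left minima nor being a derangement;
always taking the first such level makes this an involution. In a derangement without such a
level, every non-excedance `i` is a right-to-left minimum: otherwise `i` and some `j > i` have
images below `i`, so two positions cross level `i` downwards, hence two cross it upwards.
-/

theorem mem_EXCi {n : ℕ} {π : Equiv.Perm (Fin n)} {i : Fin n} : i ∈ EXCi π ↔ i < π i := by
  simp [EXCi]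

theorem mem_RLMi {n : ℕ} {π : Equiv.Perm (Fin n)} {i : Fin n} :
    i ∈ RLMi π ↔ ∀ j, i < j → π i < π j := by
  simp [RLMi]

theorem mem_derangementsF {n : ℕ} {π : Equiv.Perm (Fin n)} :
    π ∈ derangementsF n ↔ ∀ i, π i ≠ i := by
  simp [derangementsF]

theorem sign_eq_neg_one_pow_inversions {n : ℕ} (π : Equiv.Perm (Fin n)) :
    Equiv.Perm.sign π = (-1) ^ inversions π := by
  calc Equiv.Perm.sign π
      = ∏ i, ∏ j ∈ Ioi i, if π i < π j then 1 else -1 := π.sign_eq_prod_prod_Ioi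
    _ = ∏ i, ∏ j, if i < j ∧ π j < π i then -1 else 1 := by
        refine prod_congr rfl fun i _ => ?_
        rw [← filter_lt_eq_Ioi, prod_filter]
        refine prod_congr rfl fun j _ => ?_
        have : i < j → π i ≠ π j := fun hij => π.injective.ne hij.ne
        grind
    _ = ∏ p : Fin n × Fin n, if p.1 < p.2 ∧ π p.2 < π p.1 then -1 else 1 :=
        (Fintype.prod_prod_type' fun i j => if i < j ∧ π j < π i then (-1 : ℤˣ) else 1).symm
    _ = (-1) ^ inversions π := by
        rw [← prod_filter, prod_const, inversions]

theorem apply_le_of_mem_RLMi {n : ℕ} {π : Equiv.Perm (Fin n)} {i : Fin n} (hi : i ∈ RLMi π) :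
    π i ≤ i := by
  have card_le : #(Ioi i) ≤ #(Ioi (π i)) :=
    card_le_card_of_injOn π (by simpa [Set.MapsTo] using mem_RLMi.1 hi) π.injective.injOn
  rw [Fin.card_Ioi, Fin.card_Ioi] at card_le
  omega

/-- The transposition of the least and the greatest element of `s`, used to choose canonically two
elements of `s`. It is the identity unless `s` has at least two elements. -/
def swapMinMax {α : Type*} [LinearOrder α] (s : Finset α) : Equiv.Perm α :=
  if hs : s.Nonempty then Equiv.swap (s.min' hs) (s.max' hs) else 1

theorem exists_swapMinMax_eq_swap {α : Type*} [LinearOrder α] {s : Finset α} (hs : s.Nontrivial) :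
    ∃ a ∈ s, ∃ b ∈ s, a ≠ b ∧ swapMinMax s = Equiv.swap a b :=
  ⟨_, s.min'_mem hs.nonempty, _, s.max'_mem hs.nonempty,
    (s.min'_lt_max'_of_card (one_lt_card_iff_nontrivial.2 hs)).ne, dif_pos hs.nonempty⟩

section Crossings

variable {n : ℕ}

/-- The positions at which `π` crosses level `v` upwards. Levels are natural numbers, and level `v`
lies between the entries `v - 1` and `v` of `Fin n`. -/
def upCrossings (π : Equiv.Perm (Fin n)) (v : ℕ) : Finset (Fin n) :=
  univ.filter fun i => (i : ℕ) < v ∧ v ≤ (π i : ℕ)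

theorem mem_upCrossings {π : Equiv.Perm (Fin n)} {v : ℕ} {i : Fin n} :
    i ∈ upCrossings π v ↔ (i : ℕ) < v ∧ v ≤ (π i : ℕ) := by
  simp [upCrossings]

theorem card_upCrossings (π : Equiv.Perm (Fin n)) (v : ℕ) :
    #(upCrossings π v) = #{i : Fin n | v ≤ (i : ℕ) ∧ (π i : ℕ) < v} := by
  set positionsBelow : Finset (Fin n) := {i | (i : ℕ) < v}
  set valuesBelow : Finset (Fin n) := {i | (π i : ℕ) < v}
  have card_eq : #positionsBelow = #valuesBelow :=
    (card_equiv π (by simp [positionsBelow, valuesBelow])).symm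
  convert! card_sdiff_comm card_eq using 2 <;> ext i <;>
    simp [positionsBelow, valuesBelow, mem_upCrossings, and_comm]

theorem nontrivial_upCrossings_of_notMem_RLMi {π : Equiv.Perm (Fin n)} {i : Fin n}
    (hlt : π i < i) (hi : i ∉ RLMi π) : (upCrossings π i).Nontrivial := by
  obtain ⟨j, hij, hji⟩ : ∃ j, i < j ∧ π j ≤ π i := by simpa [mem_RLMi] using hi
  rw [← one_lt_card_iff_nontrivial, card_upCrossings, one_lt_card]
  refine ⟨i, ?_, j, ?_, hij.ne⟩
  · simpa using hlt
  · simpa using ⟨hij.le, hji.trans_lt hlt⟩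

theorem RLMi_eq_compl_EXCi {π : Equiv.Perm (Fin n)} (hπ : π ∈ derangementsF n)
    (hcross : ∀ v, ¬ (upCrossings π v).Nontrivial) : RLMi π = (EXCi π)ᶜ := by
  ext i
  rw [mem_compl, mem_EXCi, not_lt]
  refine ⟨apply_le_of_mem_RLMi, fun hle => ?_⟩
  by_contra hi
  have hlt : π i < i := hle.lt_of_ne (mem_derangementsF.1 hπ i)
  exact hcross i (nontrivial_upCrossings_of_notMem_RLMi hlt hi)

/-- `π` and `σ` differ only at positions where both cross level `v` upwards. All the statistics of
the theorem except the sign are invariant under this relation. -/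
def EqOffUpCrossings (v : ℕ) (π σ : Equiv.Perm (Fin n)) : Prop :=
  ∀ i, σ i = π i ∨ i ∈ upCrossings π v ∧ i ∈ upCrossings σ v

namespace EqOffUpCrossings

variable {v : ℕ} {π σ : Equiv.Perm (Fin n)}

theorem symm (h : EqOffUpCrossings v π σ) : EqOffUpCrossings v σ π :=
  fun i => (h i).imp Eq.symm And.symm

theorem mul_swap {a b : Fin n} (ha : a ∈ upCrossings π v) (hb : b ∈ upCrossings π v) :
    EqOffUpCrossings v π (π * Equiv.swap a b) := by
  intro i
  simp only [mem_upCrossings, Equiv.Perm.mul_apply] at ha hb ⊢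
  grind

theorem upCrossings_eq (h : EqOffUpCrossings v π σ) {u : ℕ} (huv : u ≤ v) :
    upCrossings σ u = upCrossings π u := by
  ext i
  have := h i
  simp only [mem_upCrossings] at this ⊢
  grind

theorem EXCi_eq (h : EqOffUpCrossings v π σ) : EXCi σ = EXCi π := by
  ext i
  have := h i
  simp only [mem_upCrossings] at this
  grind [mem_EXCi]

theorem mem_derangementsF (h : EqOffUpCrossings v π σ) (hπ : π ∈ derangementsF n) :
    σ ∈ derangementsF n := by
  rw [_root_.mem_derangementsF] at hπ ⊢
  intro i
  have := h i
  simp only [mem_upCrossings] at this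
  grind

theorem RLMi_subset (h : EqOffUpCrossings v π σ) : RLMi π ⊆ RLMi σ := by
  intro i hi
  have hle : π i ≤ i := apply_le_of_mem_RLMi hi
  have hσi : σ i = π i := (h i).resolve_right fun hcross => by
    have := mem_upCrossings.1 hcross.1
    omega
  rw [mem_RLMi] at hi ⊢
  intro j hij
  rw [hσi]
  rcases h j with hσj | ⟨-, hcross⟩
  · exact hσj ▸ hi j hij
  · have := mem_upCrossings.1 hcross
    omega

theorem RLMi_eq (h : EqOffUpCrossings v π σ) : RLMi σ = RLMi π :=
  h.symm.RLMi_subset.antisymm h.RLMi_subset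

end EqOffUpCrossings

/-- The first level that `π` crosses upwards at two or more positions, and `0` if there is no such
level. -/
noncomputable def firstMultipleLevel (π : Equiv.Perm (Fin n)) : ℕ :=
  sInf {v | (upCrossings π v).Nontrivial}

theorem upCrossings_firstMultipleLevel_nontrivial {π : Equiv.Perm (Fin n)} {v : ℕ}
    (hv : (upCrossings π v).Nontrivial) : (upCrossings π (firstMultipleLevel π)).Nontrivial :=
  Nat.sInf_mem (s := {v | (upCrossings π v).Nontrivial}) ⟨v, hv⟩

theorem EqOffUpCrossings.firstMultipleLevel_eq {π σ : Equiv.Perm (Fin n)}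
    (h : EqOffUpCrossings (firstMultipleLevel π) π σ)
    (hπ : (upCrossings π (firstMultipleLevel π)).Nontrivial) :
    firstMultipleLevel σ = firstMultipleLevel π := by
  have hσ : (upCrossings σ (firstMultipleLevel π)).Nontrivial := by
    rwa [h.upCrossings_eq le_rfl]
  have hle : firstMultipleLevel σ ≤ firstMultipleLevel π := Nat.sInf_le hσ
  refine hle.antisymm (Nat.sInf_le ?_)
  change (upCrossings π (firstMultipleLevel σ)).Nontrivial
  rw [← h.upCrossings_eq hle]
  exact upCrossings_firstMultipleLevel_nontrivial hσ

/-- The sign-reversing involution: exchange the values of `π` at the first and the last position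
crossing `firstMultipleLevel π`. -/
noncomputable def crossingSwap (π : Equiv.Perm (Fin n)) : Equiv.Perm (Fin n) :=
  π * swapMinMax (upCrossings π (firstMultipleLevel π))

theorem eqOffUpCrossings_crossingSwap {π : Equiv.Perm (Fin n)}
    (hπ : (upCrossings π (firstMultipleLevel π)).Nontrivial) :
    EqOffUpCrossings (firstMultipleLevel π) π (crossingSwap π) := by
  obtain ⟨a, ha, b, hb, -, hswap⟩ := exists_swapMinMax_eq_swap hπ
  rw [crossingSwap, hswap]
  exact EqOffUpCrossings.mul_swap ha hb

theorem sign_crossingSwap {π : Equiv.Perm (Fin n)}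
    (hπ : (upCrossings π (firstMultipleLevel π)).Nontrivial) :
    Equiv.Perm.sign (crossingSwap π) = -Equiv.Perm.sign π := by
  obtain ⟨a, -, b, -, hab, hswap⟩ := exists_swapMinMax_eq_swap hπ
  rw [crossingSwap, hswap, Equiv.Perm.sign_mul, Equiv.Perm.sign_swap hab, mul_neg_one]

theorem crossingSwap_crossingSwap {π : Equiv.Perm (Fin n)}
    (hπ : (upCrossings π (firstMultipleLevel π)).Nontrivial) :
    crossingSwap (crossingSwap π) = π := by
  have h := eqOffUpCrossings_crossingSwap hπ
  obtain ⟨a, -, b, -, -, hswap⟩ := exists_swapMinMax_eq_swap hπ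
  rw [crossingSwap, h.firstMultipleLevel_eq hπ, h.upCrossings_eq le_rfl, crossingSwap, hswap,
    mul_assoc, Equiv.swap_mul_self, mul_one]

theorem sum_sign_mul_eq_zero_of_eqOffUpCrossings {R : Type*} [CommRing R]
    {s : Finset (Equiv.Perm (Fin n))} {f : Equiv.Perm (Fin n) → R}
    (hs : ∀ v π σ, EqOffUpCrossings v π σ → π ∈ s → σ ∈ s)
    (hf : ∀ v π σ, EqOffUpCrossings v π σ → f σ = f π)
    (hf₀ : ∀ π ∈ s, (∀ v, ¬ (upCrossings π v).Nontrivial) → f π = 0) :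
    ∑ π ∈ s, ((Equiv.Perm.sign π : ℤ) : R) * f π = 0 := by
  have nontrivial_of_ne_zero {π} (hπ : π ∈ s) (hne : f π ≠ 0) :
      (upCrossings π (firstMultipleLevel π)).Nontrivial := by
    obtain ⟨v, hv⟩ := not_forall_not.1 (mt (hf₀ π hπ) hne)
    exact upCrossings_firstMultipleLevel_nontrivial hv
  rw [← sum_filter_of_ne (p := fun π => (upCrossings π (firstMultipleLevel π)).Nontrivial)
    fun π hπ hne => nontrivial_of_ne_zero hπ (right_ne_zero_of_mul hne)]
  refine sum_involution (fun π _ => crossingSwap π) ?cancel ?ne ?mem ?involutive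
  all_goals
    intro π hπ
    obtain ⟨hπs, hπ⟩ := mem_filter.1 hπ
    have h := eqOffUpCrossings_crossingSwap hπ
  case cancel =>
    rw [sign_crossingSwap hπ, hf _ _ _ h]
    push_cast
    ring
  case ne =>
    intro _ heq
    exact units_ne_neg_self _ (heq ▸ sign_crossingSwap hπ)
  case mem =>
    rw [mem_filter, h.firstMultipleLevel_eq hπ, h.upCrossings_eq le_rfl]
    exact ⟨hs _ _ _ h hπs, hπ⟩
  case involutive => exact crossingSwap_crossingSwap hπ

theorem sum_sign_mul_RLMi_eq_sum_sign_mul_compl_EXCi {R : Type*} [CommRing R] (x y : Fin n → R) :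
    ∑ π ∈ derangementsF n,
        ((Equiv.Perm.sign π : ℤ) : R) * ((∏ j ∈ RLMi π, x j) * ∏ j ∈ EXCi π, y j) =
      ∑ π ∈ derangementsF n,
        ((Equiv.Perm.sign π : ℤ) : R) * ((∏ j ∈ (EXCi π)ᶜ, x j) * ∏ j ∈ EXCi π, y j) := by
  simp_rw [← sub_eq_zero (a := Finset.sum _ _), ← sum_sub_distrib, ← mul_sub]
  refine sum_sign_mul_eq_zero_of_eqOffUpCrossings (fun _ _ _ h => h.mem_derangementsF)
    (fun _ _ _ h => by rw [h.RLMi_eq, h.EXCi_eq]) fun π hπ hcross => ?_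
  rw [RLMi_eq_compl_EXCi hπ hcross, sub_self]

end Crossings

section Determinant

variable {R : Type*} [CommRing R]

/-- The matrix whose row `i` has the entries `x i` to the left of a zero diagonal and `y i` to the
right of it. -/
def hollowMatrix {n : ℕ} (x y : Fin n → R) : Matrix (Fin n) (Fin n) R :=
  Matrix.of fun i j => if i < j then y i else if j < i then x i else 0

theorem prod_hollowMatrix_apply {n : ℕ} (x y : Fin n → R) {π : Equiv.Perm (Fin n)}
    (hπ : π ∈ derangementsF n) :
    ∏ i, hollowMatrix x y i (π i) = (∏ j ∈ (EXCi π)ᶜ, x j) * ∏ j ∈ EXCi π, y j := by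
  rw [← prod_compl_mul_prod (EXCi π)]
  congr 1 <;> refine prod_congr rfl fun i hi => ?_
  · have hlt : π i < i := (not_lt.1 (by simpa [mem_EXCi] using hi)).lt_of_ne
      (mem_derangementsF.1 hπ i)
    simp [hollowMatrix, hlt, hlt.not_gt]
  · simp [hollowMatrix, mem_EXCi.1 hi]

theorem prod_hollowMatrix_apply_eq_zero {n : ℕ} (x y : Fin n → R) {π : Equiv.Perm (Fin n)}
    (hπ : π ∉ derangementsF n) : ∏ i, hollowMatrix x y i (π i) = 0 := by
  obtain ⟨i, hi⟩ : ∃ i, π i = i := by simpa [mem_derangementsF] using hπ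
  exact prod_eq_zero (mem_univ i) (by simp [hollowMatrix, hi])

theorem det_hollowMatrix_eq_sum_derangementsF {n : ℕ} (x y : Fin n → R) :
    (hollowMatrix x y).det = ∑ π ∈ derangementsF n,
      ((Equiv.Perm.sign π : ℤ) : R) * ((∏ j ∈ (EXCi π)ᶜ, x j) * ∏ j ∈ EXCi π, y j) := by
  rw [← Matrix.det_transpose, Matrix.det_apply']
  simp only [Matrix.transpose_apply]
  rw [← sum_subset (subset_univ (derangementsF n)) fun π _ hπ => by
    rw [prod_hollowMatrix_apply_eq_zero x y hπ, mul_zero]]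
  exact sum_congr rfl fun π hπ => by rw [prod_hollowMatrix_apply x y hπ]

/-- The matrix with first column `c` whose column `k + 1` has the entry `y k` in row `k`, the entry
`-x (k + 1)` in row `k + 1`, and zeros elsewhere. -/
def borderedBidiagonal {m : ℕ} (c x y : Fin (m + 1) → R) :
    Matrix (Fin (m + 1)) (Fin (m + 1)) R :=
  Matrix.of fun i => Fin.cons (c i) fun k : Fin m =>
    if i = k.castSucc then y i else if i = k.succ then -x i else 0

theorem borderedBidiagonal_zero {m : ℕ} (c x y : Fin (m + 1) → R) (i : Fin (m + 1)) :
    borderedBidiagonal c x y i 0 = c i :=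
  rfl

theorem borderedBidiagonal_succ {m : ℕ} (c x y : Fin (m + 1) → R) (i : Fin (m + 1)) (k : Fin m) :
    borderedBidiagonal c x y i k.succ =
      if i = k.castSucc then y i else if i = k.succ then -x i else 0 :=
  rfl

section Minors

variable {m : ℕ} (c x y : Fin (m + 2) → R)

theorem det_borderedBidiagonal_submatrix_zero :
    ((borderedBidiagonal c x y).submatrix Fin.succ (Fin.succAbove 0)).det =
      (-1) ^ (m + 1) * ∏ i : Fin (m + 1), x i.succ := by
  rw [Matrix.det_of_isUpperTriangular]
  · have diagonal (i : Fin (m + 1)) :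
        borderedBidiagonal c x y i.succ i.succ = -x i.succ := by
      simp [borderedBidiagonal_succ, Fin.ext_iff]
    simp [diagonal, prod_neg]
  · intro i j hji
    have : (j : ℕ) < i := hji
    simp only [Matrix.submatrix_apply, Fin.zero_succAbove, borderedBidiagonal_succ, Fin.ext_iff,
      Fin.val_succ, Fin.val_castSucc]
    grind

theorem borderedBidiagonal_submatrix_one :
    (borderedBidiagonal c x y).submatrix Fin.succ (Fin.succAbove (Fin.succ 0)) =
      borderedBidiagonal (c ∘ Fin.succ) (x ∘ Fin.succ) (y ∘ Fin.succ) := by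
  ext i j
  cases j using Fin.cases with
  | zero => simp [borderedBidiagonal_zero]
  | succ k => simp [borderedBidiagonal_succ, Fin.ext_iff]

theorem det_borderedBidiagonal_succ :
    (borderedBidiagonal c x y).det =
      (-1) ^ (m + 1) * (c 0 * ∏ i : Fin (m + 1), x i.succ) -
        y 0 * (borderedBidiagonal (c ∘ Fin.succ) (x ∘ Fin.succ) (y ∘ Fin.succ)).det := by
  have entry_one : borderedBidiagonal c x y 0 (Fin.succ 0) = y 0 := by
    rw [borderedBidiagonal_succ, Fin.castSucc_zero, if_pos rfl]
  have entry_succ_succ (k : Fin m) : borderedBidiagonal c x y 0 k.succ.succ = 0 := by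
    simp [borderedBidiagonal_succ, Fin.ext_iff]
  rw [Matrix.det_succ_row_zero, Fin.sum_univ_succ, Fin.sum_univ_succ,
    det_borderedBidiagonal_submatrix_zero, borderedBidiagonal_submatrix_one, entry_one]
  simp only [borderedBidiagonal_zero, entry_succ_succ, Fin.val_succ, Fin.val_zero, mul_zero,
    zero_mul, sum_const_zero]
  ring

end Minors

theorem det_borderedBidiagonal {m : ℕ} (c x y : Fin (m + 1) → R) :
    (borderedBidiagonal c x y).det =
      (-1) ^ m * ∑ j, ∏ i, if i < j then y i else if j < i then x i else c i := by
  induction m with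
  | zero => simp [borderedBidiagonal_zero]
  | succ m ih =>
    rw [det_borderedBidiagonal_succ, ih, Fin.sum_univ_succ (n := m + 1)]
    simp only [Function.comp_apply, Fin.prod_univ_succ (n := m + 1), not_lt_zero, lt_self_iff_false,
      Fin.succ_pos, Fin.succ_lt_succ_iff, ↓reduceIte, ← mul_sum]
    ring

theorem det_hollowMatrix_eq_det_borderedBidiagonal {m : ℕ} (x y : Fin (m + 1) → R) :
    (hollowMatrix x y).det = (borderedBidiagonal (fun i => if 0 < i then x i else 0) x y).det := by
  apply Matrix.det_eq_of_forall_col_eq_smul_add_pred fun _ => 1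
  · intro i
    simp [hollowMatrix, borderedBidiagonal_zero]
  · intro i j
    simp only [hollowMatrix, borderedBidiagonal_succ, Matrix.of_apply, Fin.lt_def, Fin.ext_iff,
      Fin.val_succ, Fin.val_castSucc, one_mul]
    grind

theorem det_hollowMatrix {m : ℕ} (x y : Fin (m + 1) → R) :
    (hollowMatrix x y).det =
      (-1) ^ m * ∑ j ∈ Icc 1 m, ∏ i : Fin (m + 1), if (i : ℕ) < j then y i else x i := by
  have first_term : (∏ i : Fin (m + 1),
      if i < 0 then y i else if 0 < i then x i else if 0 < i then x i else 0) = 0 :=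
    prod_eq_zero (mem_univ 0) (by simp)
  rw [det_hollowMatrix_eq_det_borderedBidiagonal, det_borderedBidiagonal, Fin.sum_univ_succ,
    first_term, zero_add, ← Ico_add_one_right_eq_Icc, sum_Ico_eq_sum_range, Nat.add_sub_cancel,
    ← Fin.sum_univ_eq_sum_range fun j => ∏ i : Fin (m + 1), if (i : ℕ) < 1 + j then y i else x i]
  congr! 3 with j _ i
  grind

end Determinant

theorem stmt1_general {R : Type*} [CommRing R] (n : ℕ) (hn : 1 ≤ n) (x y : Fin n → R) :
    ∑ π ∈ derangementsF n,
      (-1) ^ inversions π * (∏ j ∈ RLMi π, x j) * (∏ j ∈ EXCi π, y j) =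
    (-1) ^ (n - 1) *
      ∑ j ∈ Icc 1 (n - 1), ∏ i : Fin n, if (i : ℕ) < j then y i else x i := by
  obtain ⟨m, rfl⟩ := Nat.exists_eq_add_of_le' hn
  calc ∑ π ∈ derangementsF (m + 1),
        (-1) ^ inversions π * (∏ j ∈ RLMi π, x j) * (∏ j ∈ EXCi π, y j)
      = ∑ π ∈ derangementsF (m + 1),
          ((Equiv.Perm.sign π : ℤ) : R) * ((∏ j ∈ RLMi π, x j) * ∏ j ∈ EXCi π, y j) := by
        simp [sign_eq_neg_one_pow_inversions, mul_assoc]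
    _ = ∑ π ∈ derangementsF (m + 1),
          ((Equiv.Perm.sign π : ℤ) : R) * ((∏ j ∈ (EXCi π)ᶜ, x j) * ∏ j ∈ EXCi π, y j) :=
        sum_sign_mul_RLMi_eq_sum_sign_mul_compl_EXCi x y
    _ = (hollowMatrix x y).det := (det_hollowMatrix_eq_sum_derangementsF x y).symm
    _ = (-1) ^ m * ∑ j ∈ Icc 1 m, ∏ i : Fin (m + 1), if (i : ℕ) < j then y i else x i :=
        det_hollowMatrix x y

/-- Here `Fin n` represents `[n] = {1,…,n}` via `i ↦ i + 1`; the variable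
`X (Sum.inl i)` is `x_{i+1}` and `X (Sum.inr i)` is `y_{i+1}`. -/
theorem stmt1 (n : ℕ) (hn : 1 ≤ n) :
    ∑ π ∈ derangementsF n,
      ((-1 : MvPolynomial (Fin n ⊕ Fin n) ℤ) ^ inversions π)
        * (∏ j ∈ RLMi π, X (Sum.inl j))
        * (∏ j ∈ EXCi π, X (Sum.inr j))
    = (-1) ^ (n - 1) *
        ∑ j ∈ Finset.Icc 1 (n - 1),
          ∏ i : Fin n,
            (if (i : ℕ) < j then (X (Sum.inr i) : MvPolynomial (Fin n ⊕ Fin n) ℤ)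
             else X (Sum.inl i)) :=
  stmt1_general n hn (fun i => X (Sum.inl i)) fun i => X (Sum.inr i)
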